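/- (Stability, YA version.) Let A and Y be random variables and V = (V_i)_{i ∈ I} a finite family of random variables such that the joint law of (A, (V_i)_{i ∈ I}) is absolutely continuous with respect to P_A ⊗ ⨂_{i ∈ I} P_{V_i} with a density that is positive almost everywhere. Suppose C ⊆ C̃ ⊆ I satisfy C = R_A(V_{C̃}) and R_{Y|A}(V_C) = C. Then also R_A(V_C) = C; in particular, the limit C*_YA of the alternating iteration S → R_{Y|A} → R_A → R_{Y|A} → ⋯ is a fixed point of both the treatment and outcome Markov boundary operations. -/

import Mathlib

/-!
Write `σ(V_J)` for the σ-algebra generated by the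
subvector `V_J`. For `J ⊆ K`, the relation `A ⊥⊥ V_{K∖J} | V_J` says that
`P(A ∈ s | V_K) = P(A ∈ s | V_J)` almost surely for every Borel set `s` (`treatBlanket_iff`).

* Positivity makes the law of `V` and the product `⨂ P_{V_i}` mutually absolutely continuous
  (`PositivePairDensity.absolutelyContinuous`). Hence a random variable that is almost surely a
  function of `V_{J₁}` and also of `V_{J₂}` is almost surely a function of `V_{J₁ ∩ J₂}`: under the
  product law the coordinates outside `J₂` may be resampled, and then frozen at a fixed value
  (`exists_factor_inter`). So blankets inside `K` are closed under finite intersections, and the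
  boundary of `V_K` is itself a blanket (`treatBoundary_isBlanket`).
* In particular `C = R_A(V_C̃)` is a blanket in `C̃`. A blanket `J` of `V_C` satisfies
  `P(A ∈ s | V_C̃) = P(A ∈ s | V_C) = P(A ∈ s | V_J)`, so it is a blanket of `V_C̃`, and
  therefore contains `C`.
-/

open MeasureTheory ProbabilityTheory

/-- `X ⊥⊥ Y | W` under `μ`: conditional independence of the random elements `X` and `Y`
given the σ-algebra generated by the random element `W`. -/
def CondIndepGiven {Ω α β γ : Type*} [mΩ : MeasurableSpace Ω] [StandardBorelSpace Ω]
    [MeasurableSpace α] [MeasurableSpace β] [MeasurableSpace γ]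
    (μ : Measure Ω) [IsFiniteMeasure μ]
    (X : Ω → α) (Y : Ω → β) (W : Ω → γ) : Prop :=
  ∃ hle : MeasurableSpace.comap W inferInstance ≤ mΩ,
    CondIndepFun (MeasurableSpace.comap W inferInstance) hle X Y μ

/-- The subvector `(V_i)_{i ∈ J}` of a family of random variables. -/
def subvec {Ω I : Type*} (V : I → Ω → ℝ) (J : Set I) : Ω → (J → ℝ) :=
  fun ω j => V j ω

/-- The joint law of `(V_i)_{i ∈ I}` is absolutely continuous w.r.t. the product
`⨂_{i ∈ I} P_{V_i}` of its one-dimensional marginal laws, with a density that is positive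
almost everywhere. -/
def PositiveFamilyDensity {Ω I : Type*} [MeasurableSpace Ω] [Fintype I]
    (μ : Measure Ω) (V : I → Ω → ℝ) : Prop :=
  μ.map (fun ω i => V i ω) ≪ Measure.pi (fun i => μ.map (V i)) ∧
    ∀ᵐ x ∂(Measure.pi fun i => μ.map (V i)),
      0 < (μ.map (fun ω i => V i ω)).rnDeriv (Measure.pi fun i => μ.map (V i)) x

/-- The joint law of `(W, (V_i)_{i ∈ I})` is absolutely continuous w.r.t. the product
`P_W ⊗ ⨂_{i ∈ I} P_{V_i}` of its one-dimensional marginal laws, with a density that is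
positive almost everywhere. -/
def PositivePairDensity {Ω α I : Type*} [MeasurableSpace Ω] [MeasurableSpace α] [Fintype I]
    (μ : Measure Ω) (W : Ω → α) (V : I → Ω → ℝ) : Prop :=
  μ.map (fun ω => (W ω, fun i => V i ω)) ≪ (μ.map W).prod (Measure.pi fun i => μ.map (V i)) ∧
    ∀ᵐ x ∂((μ.map W).prod (Measure.pi fun i => μ.map (V i))),
      0 < (μ.map (fun ω => (W ω, fun i => V i ω))).rnDeriv
            ((μ.map W).prod (Measure.pi fun i => μ.map (V i))) x

/-- The joint law of `(W, U, (V_i)_{i ∈ I})` is absolutely continuous w.r.t. the product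
`P_W ⊗ P_U ⊗ ⨂_{i ∈ I} P_{V_i}` of its one-dimensional marginal laws, with a density that is
positive almost everywhere. -/
def PositiveTripleDensity {Ω I : Type*} [MeasurableSpace Ω] [Fintype I]
    (μ : Measure Ω) (W U : Ω → ℝ) (V : I → Ω → ℝ) : Prop :=
  μ.map (fun ω => (W ω, U ω, fun i => V i ω)) ≪
      (μ.map W).prod ((μ.map U).prod (Measure.pi fun i => μ.map (V i))) ∧
    ∀ᵐ x ∂((μ.map W).prod ((μ.map U).prod (Measure.pi fun i => μ.map (V i)))),
      0 < (μ.map (fun ω => (W ω, U ω, fun i => V i ω))).rnDeriv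
            ((μ.map W).prod ((μ.map U).prod (Measure.pi fun i => μ.map (V i)))) x

/-- `J ∈ 𝔯_A(V)`: `J` is a treatment Markov blanket of the family `V`,
i.e. `A ⊥⊥ V_{I∖J} | V_J`. -/
def IsTreatBlanket {Ω I : Type*} [MeasurableSpace Ω] [StandardBorelSpace Ω]
    (μ : Measure Ω) [IsFiniteMeasure μ] (A : Ω → ℝ) (V : I → Ω → ℝ) (J : Set I) : Prop :=
  CondIndepGiven μ A (subvec V (Set.univ \ J)) (subvec V J)

/-- `J ∈ 𝔯_{Y|A}(V)`: `J` is an outcome Markov blanket of the family `V`,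
i.e. `Y ⊥⊥ V_{I∖J} | (A, V_J)`. -/
def IsOutBlanket {Ω I : Type*} [MeasurableSpace Ω] [StandardBorelSpace Ω]
    (μ : Measure Ω) [IsFiniteMeasure μ] (A Y : Ω → ℝ) (V : I → Ω → ℝ) (J : Set I) : Prop :=
  CondIndepGiven μ Y (subvec V (Set.univ \ J)) (fun ω => (A ω, subvec V J ω))

/-- `R_A(V_J)`: the treatment Markov boundary of the subfamily `(V_i)_{i ∈ J}`, i.e. the
intersection of all `J' ⊆ J` such that `A ⊥⊥ V_{J∖J'} | V_{J'}`. -/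
def treatBoundary {Ω I : Type*} [MeasurableSpace Ω] [StandardBorelSpace Ω]
    (μ : Measure Ω) [IsFiniteMeasure μ] (A : Ω → ℝ) (V : I → Ω → ℝ) (J : Set I) : Set I :=
  ⋂₀ {J' : Set I | J' ⊆ J ∧ CondIndepGiven μ A (subvec V (J \ J')) (subvec V J')}

/-- `R_{Y|A}(V_J)`: the outcome Markov boundary of the subfamily `(V_i)_{i ∈ J}`, i.e. the
intersection of all `J' ⊆ J` such that `Y ⊥⊥ V_{J∖J'} | (A, V_{J'})`. -/
def outBoundary {Ω I : Type*} [MeasurableSpace Ω] [StandardBorelSpace Ω]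
    (μ : Measure Ω) [IsFiniteMeasure μ] (A Y : Ω → ℝ) (V : I → Ω → ℝ) (J : Set I) : Set I :=
  ⋂₀ {J' : Set I | J' ⊆ J ∧
        CondIndepGiven μ Y (subvec V (J \ J')) (fun ω => (A ω, subvec V J' ω))}

/-- `A` is a binary treatment taking values in `{0, 1}`. -/
def IsBinary {Ω : Type*} (A : Ω → ℝ) : Prop :=
  ∀ ω, A ω = 0 ∨ A ω = 1

/-- Consistency of the observed outcome `Y` with the potential outcomes `Y₀, Y₁`:
`Y = Y₁` a.s. on `{A = 1}` and `Y = Y₀` a.s. on `{A = 0}`. -/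
def Consistency {Ω : Type*} [MeasurableSpace Ω] (μ : Measure Ω) (A Y Y0 Y1 : Ω → ℝ) : Prop :=
  (∀ᵐ ω ∂μ, A ω = 1 → Y ω = Y1 ω) ∧ (∀ᵐ ω ∂μ, A ω = 0 → Y ω = Y0 ω)

/-- The random vector `C` controls for confounding: `Y_a ⊥⊥ A | C` for `a = 0, 1`. -/
def ControlsConfounding {Ω γ : Type*} [MeasurableSpace Ω] [StandardBorelSpace Ω]
    [MeasurableSpace γ] (μ : Measure Ω) [IsFiniteMeasure μ]
    (A Y0 Y1 : Ω → ℝ) (C : Ω → γ) : Prop :=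
  CondIndepGiven μ Y0 A C ∧ CondIndepGiven μ Y1 A C

/-- The σ-algebra generated by the subvector `V_J`. -/
abbrev sigmaSub {Ω I : Type*} (V : I → Ω → ℝ) (J : Set I) : MeasurableSpace Ω :=
  MeasurableSpace.comap (subvec V J) inferInstance

lemma measurable_subvec {Ω I : Type*} [MeasurableSpace Ω] {V : I → Ω → ℝ}
    (hV : ∀ i, Measurable (V i)) (J : Set I) : Measurable (subvec V J) :=
  measurable_pi_lambda _ fun j => hV j

lemma sigmaSub_le {Ω I : Type*} [mΩ : MeasurableSpace Ω] {V : I → Ω → ℝ}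
    (hV : ∀ i, Measurable (V i)) (J : Set I) : sigmaSub V J ≤ mΩ :=
  (measurable_subvec hV J).comap_le

lemma sigmaSub_mono {Ω I : Type*} (V : I → Ω → ℝ) {J K : Set I} (h : J ⊆ K) :
    sigmaSub V J ≤ sigmaSub V K := by
  have hm : Measurable (fun (x : K → ℝ) (j : J) => x ⟨j, h j.2⟩) := by fun_prop
  have he : subvec V J = (fun (x : K → ℝ) (j : J) => x ⟨j, h j.2⟩) ∘ subvec V K := rfl
  unfold sigmaSub
  rw [he, ← MeasurableSpace.comap_comp]
  exact MeasurableSpace.comap_mono hm.comap_le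

/-- Splitting `V_K` into `V_J` and `V_{K∖J}` does not change the generated σ-algebra. -/
lemma sigmaSub_eq_pair {Ω I : Type*} (V : I → Ω → ℝ) {J K : Set I} (h : J ⊆ K) :
    MeasurableSpace.comap (fun ω => (subvec V J ω, subvec V (K \ J) ω)) inferInstance =
      sigmaSub V K := by
  apply le_antisymm
  · refine (MeasurableSpace.comap_prodMk (subvec V J) (subvec V (K \ J))).le.trans ?_
    exact sup_le (sigmaSub_mono V h) (sigmaSub_mono V Set.sdiff_subset)
  · classical
    have hm : Measurable (fun (p : (J → ℝ) × ((K \ J : Set I) → ℝ)) (k : K) =>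
        if hk : (k : I) ∈ J then p.1 ⟨k, hk⟩ else p.2 ⟨k, k.2, hk⟩) := by
      refine measurable_pi_lambda _ fun k => ?_
      by_cases hk : (k : I) ∈ J
      · simp only [hk, dif_pos]; fun_prop
      · simp only [hk, dif_neg, not_false_iff]; fun_prop
    have he : subvec V K = (fun (p : (J → ℝ) × ((K \ J : Set I) → ℝ)) (k : K) =>
        if hk : (k : I) ∈ J then p.1 ⟨k, hk⟩ else p.2 ⟨k, k.2, hk⟩) ∘
          (fun ω => (subvec V J ω, subvec V (K \ J) ω)) := by
      funext ω k
      by_cases hk : (k : I) ∈ J <;> simp [hk, subvec]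
    unfold sigmaSub
    rw [he, ← MeasurableSpace.comap_comp]
    exact MeasurableSpace.comap_mono hm.comap_le

/-- If conditioning the event `t₁` on the larger σ-algebra `m` amounts to conditioning it on `m'`,
then `t₁` is conditionally independent given `m'` of every event of `m`. -/
lemma condExp_inter_of_condExp_eq {Ω : Type*} {m' m mΩ : MeasurableSpace Ω} (μ : Measure Ω)
    [IsFiniteMeasure μ] (h' : m' ≤ m) (hm : m ≤ mΩ) {t₁ t₂ : Set Ω}
    (ht₁ : MeasurableSet t₁) (ht₂ : MeasurableSet[m] t₂)
    (h : μ⟦t₁ | m⟧ =ᵐ[μ] μ⟦t₁ | m'⟧) :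
    μ⟦t₁ ∩ t₂ | m'⟧ =ᵐ[μ] μ⟦t₁ | m'⟧ * μ⟦t₂ | m'⟧ := by
  have hi (t : Set Ω) (ht : MeasurableSet t) :
      Integrable (t.indicator fun _ => (1 : ℝ)) μ := (integrable_const _).indicator ht
  have hmul : ((t₁ ∩ t₂).indicator fun _ => (1 : ℝ)) =
      (t₁.indicator fun _ => (1 : ℝ)) * (t₂.indicator fun _ => (1 : ℝ)) := by
    funext ω; by_cases h1 : ω ∈ t₁ <;> by_cases h2 : ω ∈ t₂ <;> simp [h1, h2]
  have hi12 : Integrable ((t₁.indicator fun _ => (1 : ℝ)) * (t₂.indicator fun _ => (1 : ℝ))) μ := by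
    rw [← hmul]; exact hi _ (ht₁.inter (hm _ ht₂))
  have hsm2 : StronglyMeasurable[m] (t₂.indicator fun _ => (1 : ℝ)) :=
    stronglyMeasurable_const.indicator ht₂
  have e1 : μ[(t₁.indicator fun _ => (1 : ℝ)) * (t₂.indicator fun _ => (1 : ℝ)) | m]
      =ᵐ[μ] μ⟦t₁ | m'⟧ * (t₂.indicator fun _ => (1 : ℝ)) :=
    (condExp_mul_of_stronglyMeasurable_right hsm2 hi12 (hi _ ht₁)).trans
      (h.mul (Filter.EventuallyEq.refl _ _))
  have hi3 : Integrable (μ⟦t₁ | m'⟧ * (t₂.indicator fun _ => (1 : ℝ))) μ :=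
    integrable_condExp.congr e1
  rw [hmul]
  calc μ[(t₁.indicator fun _ => (1 : ℝ)) * (t₂.indicator fun _ => (1 : ℝ)) | m']
      =ᵐ[μ] μ[μ[(t₁.indicator fun _ => (1 : ℝ)) * (t₂.indicator fun _ => (1 : ℝ)) | m] | m'] :=
        (condExp_condExp_of_le h' hm).symm
    _ =ᵐ[μ] μ[μ⟦t₁ | m'⟧ * (t₂.indicator fun _ => (1 : ℝ)) | m'] := condExp_congr_ae e1
    _ =ᵐ[μ] μ⟦t₁ | m'⟧ * μ⟦t₂ | m'⟧ :=
        condExp_mul_of_stronglyMeasurable_left stronglyMeasurable_condExp hi3 (hi _ (hm _ ht₂))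

/-- `A ⊥⊥ V_{K∖J} | V_J` means that `P(A ∈ s | V_K) = P(A ∈ s | V_J)` for every Borel set `s`. -/
lemma treatBlanket_iff {Ω I : Type*} [MeasurableSpace Ω] [StandardBorelSpace Ω] [Fintype I]
    (μ : Measure Ω) [IsFiniteMeasure μ] {A : Ω → ℝ} {V : I → Ω → ℝ}
    (hA : Measurable A) (hV : ∀ i, Measurable (V i)) {J K : Set I} (h : J ⊆ K) :
    CondIndepGiven μ A (subvec V (K \ J)) (subvec V J) ↔
      ∀ s, MeasurableSet s → μ⟦A ⁻¹' s | sigmaSub V K⟧ =ᵐ[μ] μ⟦A ⁻¹' s | sigmaSub V J⟧ := by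
  have mJ := measurable_subvec hV J
  have mD := measurable_subvec hV (K \ J)
  constructor
  · rintro ⟨hle, hci⟩ s hs
    have hd := (condIndepFun_iff_condDistrib_prod_ae_eq_prodMkRight hA mD mJ).1 hci.symm
    have hd' := ae_of_ae_map (mJ.prodMk mD).aemeasurable hd
    have e1 := condDistrib_ae_eq_condExp (μ := μ) (mJ.prodMk mD) hA hs
    have e2 := condDistrib_ae_eq_condExp (μ := μ) mJ hA hs
    rw [← sigmaSub_eq_pair V h]
    filter_upwards [hd', e1, e2] with ω h0 h1 h2
    rw [← h2]
    refine h1.symm.trans ?_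
    simp only [h0, Kernel.prodMkRight_apply]
  · intro H
    refine ⟨mJ.comap_le, (condIndepFun_iff _ _ _ _ hA mD μ).2 ?_⟩
    rintro _ t₂ ⟨s, hs, rfl⟩ ht₂
    exact condExp_inter_of_condExp_eq μ (sigmaSub_mono V h) (sigmaSub_le hV K) (hA hs)
      (sigmaSub_mono V Set.sdiff_subset _ ht₂) (H s hs)

/-- Under a positive joint density, the law of `V` and the product of its marginals have the same
null sets. -/
lemma PositivePairDensity.absolutelyContinuous {Ω I : Type*} [MeasurableSpace Ω] [Fintype I]
    {μ : Measure Ω} [IsProbabilityMeasure μ] {A : Ω → ℝ} {V : I → Ω → ℝ}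
    (hA : Measurable A) (hV : ∀ i, Measurable (V i)) (h : PositivePairDensity μ A V) :
    μ.map (fun ω i => V i ω) ≪ Measure.pi (fun i => μ.map (V i)) ∧
      Measure.pi (fun i => μ.map (V i)) ≪ μ.map (fun ω i => V i ω) := by
  have hVm : Measurable (fun ω i => V i ω) := measurable_pi_lambda _ hV
  have : IsProbabilityMeasure (μ.map A) := Measure.isProbabilityMeasure_map hA.aemeasurable
  have (i : I) : IsProbabilityMeasure (μ.map (V i)) :=
    Measure.isProbabilityMeasure_map (hV i).aemeasurable
  obtain ⟨h1, h2⟩ := h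
  set ν := μ.map (fun ω => (A ω, fun i => V i ω)) with hν
  set ρ := (μ.map A).prod (Measure.pi fun i => μ.map (V i)) with hρ
  have : IsProbabilityMeasure ν := Measure.isProbabilityMeasure_map (hA.prodMk hVm).aemeasurable
  have hsnd : ν.map Prod.snd = μ.map (fun ω i => V i ω) := by
    rw [hν, Measure.map_map measurable_snd (hA.prodMk hVm)]; rfl
  have hsnd' : ρ.map Prod.snd = Measure.pi (fun i => μ.map (V i)) := by
    rw [hρ, Measure.map_snd_prod]; simp
  have h3 : ρ ≪ ν := by
    have := withDensity_absolutelyContinuous' (μ := ρ) (f := ν.rnDeriv ρ)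
      (Measure.measurable_rnDeriv ν ρ).aemeasurable (h2.mono fun x hx => hx.ne')
    rwa [Measure.withDensity_rnDeriv_eq ν ρ h1] at this
  rw [← hsnd, ← hsnd']
  exact ⟨h1.map measurable_snd, h3.map measurable_snd⟩

open Classical in
/-- Resampling the coordinates outside `J` from an independent copy preserves a product
probability measure. -/
lemma measurePreserving_piecewise {I : Type*} [Fintype I] (P : I → Measure ℝ)
    [∀ i, IsProbabilityMeasure (P i)] (J : Set I) :
    MeasurePreserving (fun p : (I → ℝ) × (I → ℝ) => J.piecewise p.1 p.2)
      ((Measure.pi P).prod (Measure.pi P)) (Measure.pi P) := by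
  have hm : Measurable (fun p : (I → ℝ) × (I → ℝ) => J.piecewise p.1 p.2) := by
    refine measurable_pi_lambda _ fun i => ?_
    by_cases hi : i ∈ J
    · simp only [hi, Set.piecewise_eq_of_mem]; fun_prop
    · simp only [hi, Set.piecewise_eq_of_notMem, not_false_iff]; fun_prop
  refine ⟨hm, (Measure.pi_eq fun s hs => ?_).symm⟩
  rw [Measure.map_apply hm (MeasurableSet.univ_pi hs)]
  have hpre : (fun p : (I → ℝ) × (I → ℝ) => J.piecewise p.1 p.2) ⁻¹' Set.univ.pi s =
      (Set.univ.pi fun i => if i ∈ J then s i else Set.univ) ×ˢ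
        (Set.univ.pi fun i => if i ∈ J then Set.univ else s i) := by
    ext p
    simp only [Set.mem_preimage, Set.mem_pi, Set.mem_univ, true_imp_iff, Set.mem_prod,
      ← forall_and]
    refine forall_congr' fun i => ?_
    by_cases hi : i ∈ J <;> simp [hi]
  rw [hpre, Measure.prod_prod, Measure.pi_pi, Measure.pi_pi, ← Finset.prod_mul_distrib]
  refine Finset.prod_congr rfl fun i _ => ?_
  by_cases hi : i ∈ J <;> simp [hi]

/-- A random variable that is almost surely a function of `V_{J₁}` and of `V_{J₂}` is almost surely
a function of `V_{J₁ ∩ J₂}`. -/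
lemma exists_factor_inter {Ω I : Type*} [MeasurableSpace Ω] [Fintype I]
    {μ : Measure Ω} [IsProbabilityMeasure μ] {A : Ω → ℝ} {V : I → Ω → ℝ}
    (hA : Measurable A) (hV : ∀ i, Measurable (V i)) (hpos : PositivePairDensity μ A V)
    {J₁ J₂ : Set I} {g₁ g₂ : Ω → ℝ} (hg₁ : StronglyMeasurable[sigmaSub V J₁] g₁)
    (hg₂ : StronglyMeasurable[sigmaSub V J₂] g₂) (hg : g₁ =ᵐ[μ] g₂) :
    ∃ g, StronglyMeasurable[sigmaSub V (J₁ ∩ J₂)] g ∧ g₁ =ᵐ[μ] g := by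
  classical
  obtain ⟨φ₁, hφ₁, rfl⟩ := hg₁.exists_eq_measurable_comp
  obtain ⟨φ₂, hφ₂, rfl⟩ := hg₂.exists_eq_measurable_comp
  have (i : I) : IsProbabilityMeasure (μ.map (V i)) :=
    Measure.isProbabilityMeasure_map (hV i).aemeasurable
  obtain ⟨hac, hac'⟩ := hpos.absolutelyContinuous hA hV
  set π := Measure.pi (fun i => μ.map (V i)) with hπ
  have hVm : Measurable (fun ω i => V i ω) := measurable_pi_lambda _ hV
  have hr (J : Set I) : Measurable (fun (x : I → ℝ) (j : J) => x j) := by fun_prop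
  have hset : MeasurableSet {x : I → ℝ | φ₁ (fun j => x j) = φ₂ (fun j => x j)} :=
    measurableSet_eq_fun (hφ₁.measurable.comp (hr J₁)) (hφ₂.measurable.comp (hr J₂))
  have hlaw : ∀ᵐ x ∂(μ.map fun ω i => V i ω), φ₁ (fun j => x j) = φ₂ (fun j => x j) :=
    (ae_map_iff hVm.aemeasurable hset).2 hg
  have hx : ∀ᵐ x ∂π, φ₁ (fun j => x j) = φ₂ (fun j => x j) := hac'.ae_le hlaw
  have hmp := measurePreserving_piecewise (fun i => μ.map (V i)) J₂
  have hxz := hmp.quasiMeasurePreserving.ae hx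
  have hx' : ∀ᵐ p ∂π.prod π, φ₁ (fun j => p.1 j) = φ₂ (fun j => p.1 j) :=
    Measure.quasiMeasurePreserving_fst.ae hx
  -- Resampling the coordinates outside `J₂` does not change `φ₂`, hence not `φ₁` either.
  have hkey : ∀ᵐ p ∂π.prod π,
      φ₁ (fun j => p.1 j) = φ₁ (fun j => J₂.piecewise p.1 p.2 j) := by
    filter_upwards [hxz, hx'] with p h1 h2
    rw [h2, h1]
    congr 1
    funext j
    simp [j.2]
  have hkey' : ∀ᵐ p ∂π.prod π,
      φ₁ (fun j => p.2 j) = φ₁ (fun j => J₂.piecewise p.2 p.1 j) :=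
    Measure.measurePreserving_swap.quasiMeasurePreserving.ae hkey
  obtain ⟨z, hz⟩ := (Measure.ae_ae_of_ae_prod hkey').exists
  let ψ : ((J₁ ∩ J₂ : Set I) → ℝ) → ℝ := fun y =>
    φ₁ fun j => if h : (j : I) ∈ J₂ then y ⟨j, j.2, h⟩ else z j
  have hψ : Measurable ψ := by
    refine hφ₁.measurable.comp (measurable_pi_lambda _ fun j => ?_)
    by_cases h : (j : I) ∈ J₂
    · simp only [h, dif_pos]; fun_prop
    · simp only [h, dif_neg, not_false_iff]; fun_prop
  refine ⟨ψ ∘ subvec V (J₁ ∩ J₂),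
    hψ.stronglyMeasurable.comp_measurable (comap_measurable _), ?_⟩
  have hω := ae_of_ae_map hVm.aemeasurable (hac.ae_le hz)
  filter_upwards [hω] with ω h
  refine h.trans ?_
  simp only [ψ, Function.comp_apply]
  congr 1

/-- The intersection property: blankets inside `K` are closed under intersection. -/
lemma treatBlanket_inter {Ω I : Type*} [MeasurableSpace Ω] [StandardBorelSpace Ω] [Fintype I]
    {μ : Measure Ω} [IsProbabilityMeasure μ] {A : Ω → ℝ} {V : I → Ω → ℝ}
    (hA : Measurable A) (hV : ∀ i, Measurable (V i)) (hpos : PositivePairDensity μ A V)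
    {J₁ J₂ K : Set I} (h₁ : J₁ ⊆ K) (h₂ : J₂ ⊆ K)
    (b₁ : CondIndepGiven μ A (subvec V (K \ J₁)) (subvec V J₁))
    (b₂ : CondIndepGiven μ A (subvec V (K \ J₂)) (subvec V J₂)) :
    CondIndepGiven μ A (subvec V (K \ (J₁ ∩ J₂))) (subvec V (J₁ ∩ J₂)) := by
  have h12 : J₁ ∩ J₂ ⊆ K := Set.inter_subset_left.trans h₁
  rw [treatBlanket_iff μ hA hV h₁] at b₁
  rw [treatBlanket_iff μ hA hV h₂] at b₂
  rw [treatBlanket_iff μ hA hV h12]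
  intro s hs
  obtain ⟨g, hg, hgeq⟩ := exists_factor_inter hA hV hpos
    (stronglyMeasurable_condExp (m := sigmaSub V J₁) (μ := μ))
    (stronglyMeasurable_condExp (m := sigmaSub V J₂) (μ := μ)) ((b₁ s hs).symm.trans (b₂ s hs))
  have hKg := (b₁ s hs).trans hgeq
  have hgi : Integrable g μ := integrable_condExp.congr hKg
  have hle := sigmaSub_le hV (J₁ ∩ J₂)
  calc μ⟦A ⁻¹' s | sigmaSub V K⟧ =ᵐ[μ] g := hKg
    _ = μ[g | sigmaSub V (J₁ ∩ J₂)] := (condExp_of_stronglyMeasurable hle hg hgi).symm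
    _ =ᵐ[μ] μ[μ⟦A ⁻¹' s | sigmaSub V K⟧ | sigmaSub V (J₁ ∩ J₂)] := condExp_congr_ae hKg.symm
    _ =ᵐ[μ] μ⟦A ⁻¹' s | sigmaSub V (J₁ ∩ J₂)⟧ :=
        condExp_condExp_of_le (sigmaSub_mono V h12) (sigmaSub_le hV K)

lemma treatBlanket_self {Ω I : Type*} [MeasurableSpace Ω] [StandardBorelSpace Ω] [Fintype I]
    (μ : Measure Ω) [IsProbabilityMeasure μ] {A : Ω → ℝ} {V : I → Ω → ℝ}
    (hA : Measurable A) (hV : ∀ i, Measurable (V i)) (K : Set I) :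
    CondIndepGiven μ A (subvec V (K \ K)) (subvec V K) :=
  (treatBlanket_iff μ hA hV subset_rfl).2 fun _ _ => Filter.EventuallyEq.refl _ _

/-- Under positivity the treatment Markov boundary is itself a blanket. -/
lemma treatBoundary_isBlanket {Ω I : Type*} [MeasurableSpace Ω] [StandardBorelSpace Ω] [Fintype I]
    {μ : Measure Ω} [IsProbabilityMeasure μ] {A : Ω → ℝ} {V : I → Ω → ℝ}
    (hA : Measurable A) (hV : ∀ i, Measurable (V i)) (hpos : PositivePairDensity μ A V)
    (K : Set I) :
    CondIndepGiven μ A (subvec V (K \ treatBoundary μ A V K)) (subvec V (treatBoundary μ A V K)) := by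
  -- By finiteness there is a minimal blanket; closure under intersection puts it in every blanket.
  let S : Set (Set I) :=
    {J' | J' ⊆ K ∧ CondIndepGiven μ A (subvec V (K \ J')) (subvec V J')}
  have hS : S.Nonempty := ⟨K, subset_rfl, treatBlanket_self μ hA hV K⟩
  obtain ⟨M, hM⟩ := S.toFinite.exists_minimal hS
  have hMeq : treatBoundary μ A V K = M := by
    refine subset_antisymm (Set.sInter_subset_of_mem hM.prop) (Set.subset_sInter fun J hJ => ?_)
    have hmem : M ∩ J ∈ S := ⟨Set.inter_subset_left.trans hM.prop.1,
      treatBlanket_inter hA hV hpos hM.prop.1 hJ.1 hM.prop.2 hJ.2⟩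
    exact (hM.le_of_le hmem Set.inter_subset_left).trans Set.inter_subset_right
  rw [hMeq]
  exact hM.prop.2

/-- Stability, YA version: if `C ⊆ C̃ ⊆ I` with `C = R_A(V_{C̃})` and
`R_{Y|A}(V_C) = C`, then also `R_A(V_C) = C`. -/
theorem stability_YA
    {Ω I : Type*} [MeasurableSpace Ω] [StandardBorelSpace Ω] [Fintype I]
    (μ : Measure Ω) [IsProbabilityMeasure μ]
    (A Y : Ω → ℝ) (V : I → Ω → ℝ)
    (hA : Measurable A) (hY : Measurable Y) (hV : ∀ i, Measurable (V i))
    (hpos : PositivePairDensity μ A V)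
    (C Ctil : Set I) (hsub : C ⊆ Ctil)
    (hC : C = treatBoundary μ A V Ctil)
    (hfixY : outBoundary μ A Y V C = C) :
    treatBoundary μ A V C = C := by
  have hCb : CondIndepGiven μ A (subvec V (Ctil \ C)) (subvec V C) := by
    rw [hC]
    exact treatBoundary_isBlanket hA hV hpos Ctil
  refine subset_antisymm
    (Set.sInter_subset_of_mem ⟨subset_rfl, treatBlanket_self μ hA hV C⟩)
    (Set.subset_sInter fun J hJ => ?_)
  obtain ⟨hJC, hJ⟩ := hJ
  rw [treatBlanket_iff μ hA hV hsub] at hCb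
  rw [treatBlanket_iff μ hA hV hJC] at hJ
  have hJtil : CondIndepGiven μ A (subvec V (Ctil \ J)) (subvec V J) :=
    (treatBlanket_iff μ hA hV (hJC.trans hsub)).2 fun s hs => (hCb s hs).trans (hJ s hs)
  have hCJ : treatBoundary μ A V Ctil ⊆ J :=
    Set.sInter_subset_of_mem ⟨hJC.trans hsub, hJtil⟩
  rwa [← hC] at hCJ
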